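/- Let R ≥ 1 and for each i = 1,…,R let U_i ∈ ℂ^{N_i×K_i} with rows u_{i,1},…,u_{i,N_i}, and let F_i(A) = ∑_{j∈A} ∑_{l∈A} |⟨u_{i,j}, u_{i,l}⟩|² for A ⊆ {1,…,N_i}. Let 𝒩 be the disjoint union of the sets 𝒩_i = {1,…,N_i}, and for S ⊆ 𝒩 write S_i = S ∩ 𝒩_i. Define G(S) = ∏_{i=1}^R F_i(𝒩_i) − ∏_{i=1}^R F_i(𝒩_i ∖ S_i). Then G is normalized (G(∅) = 0) and monotone non-decreasing: G(S) ≤ G(S ∪ {x}) for every S ⊆ 𝒩 and x ∈ 𝒩 ∖ S. -/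

import Mathlib

open scoped BigOperators

/-- Per-domain frame potential set function:
`F_i(A) = ∑_{j∈A} ∑_{l∈A} |⟨u_{i,j}, u_{i,l}⟩|²`. -/
noncomputable def frameSetFun {n k : ℕ} (U : Matrix (Fin n) (Fin k) ℂ)
    (A : Finset (Fin n)) : ℝ :=
  ∑ j ∈ A, ∑ l ∈ A, ‖∑ c, star (U j c) * U l c‖ ^ 2

/-- `G(S) = ∏_i F_i(𝒩_i) − ∏_i F_i(𝒩_i ∖ S_i)`, where the ground set `𝒩` is
the disjoint union of the per-domain index sets `𝒩_i` (modeled by a sigma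
type) and `S_i` is the part of `S` lying in domain `i`. -/
noncomputable def G {R : ℕ} {N K : Fin R → ℕ}
    (U : ∀ i, Matrix (Fin (N i)) (Fin (K i)) ℂ)
    (S : Finset (Σ i : Fin R, Fin (N i))) : ℝ :=
  (∏ i, frameSetFun (U i) Finset.univ) -
    ∏ i, frameSetFun (U i)
      (Finset.univ.filter fun j : Fin (N i) => (⟨i, j⟩ : Σ i, Fin (N i)) ∉ S)

theorem monotone_sum_sum_of_nonneg {ι M : Type*} [AddCommMonoid M] [Preorder M] [AddLeftMono M]
    {w : ι → ι → M} (hw : ∀ j l, 0 ≤ w j l) :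
    Monotone fun A : Finset ι => ∑ j ∈ A, ∑ l ∈ A, w j l := by
  simp only [← Finset.sum_product']
  exact (Finset.sum_mono_set_of_nonneg fun p => hw p.1 p.2).comp
    fun _ _ hAB => Finset.product_subset_product hAB hAB

theorem antitone_filter_apply_notMem {α β : Type*} [DecidableEq β] (f : α → β) (s : Finset α) :
    Antitone fun S : Finset β => s.filter fun a => f a ∉ S :=
  fun _ _ hST => Finset.monotone_filter_right s fun _ _ haT haS => haT (hST haS)

theorem frameSetFun_nonneg {n k : ℕ} (U : Matrix (Fin n) (Fin k) ℂ) (A : Finset (Fin n)) :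
    0 ≤ frameSetFun U A :=
  Finset.sum_nonneg fun _ _ => Finset.sum_nonneg fun _ _ => sq_nonneg _

theorem frameSetFun_mono {n k : ℕ} (U : Matrix (Fin n) (Fin k) ℂ) : Monotone (frameSetFun U) :=
  monotone_sum_sum_of_nonneg fun _ _ => sq_nonneg _

section

variable {R : ℕ} {N K : Fin R → ℕ} (U : ∀ i, Matrix (Fin (N i)) (Fin (K i)) ℂ)

theorem G_empty : G U ∅ = 0 := by
  simp [G]

theorem antitone_prod_frameSetFun_filter_notMem :
    Antitone fun S : Finset (Σ i, Fin (N i)) =>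
      ∏ i, frameSetFun (U i) (Finset.univ.filter fun j => (⟨i, j⟩ : Σ i, Fin (N i)) ∉ S) :=
  Antitone.finsetProd
    (fun i _ => (frameSetFun_mono (U i)).comp_antitone
      (antitone_filter_apply_notMem (Sigma.mk i) Finset.univ))
    fun i _ _ => frameSetFun_nonneg (U i) _

theorem G_mono : Monotone (G U) :=
  fun _ _ hST => sub_le_sub_left (antitone_prod_frameSetFun_filter_notMem U hST) _

end

/-- `G` is normalized and monotone non-decreasing. -/
theorem G_normalized_monotone (R : ℕ) (hR : 1 ≤ R) (N K : Fin R → ℕ)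
    (U : ∀ i, Matrix (Fin (N i)) (Fin (K i)) ℂ) :
    G U ∅ = 0 ∧
    (∀ (S : Finset (Σ i : Fin R, Fin (N i))) (x : Σ i : Fin R, Fin (N i)),
      x ∉ S → G U S ≤ G U (insert x S)) :=
  ⟨G_empty U, fun S x _ => G_mono U (Finset.subset_insert x S)⟩
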